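/- Few flexes cannot yield sublinear-in-√T gap (Proposition 2): For every a > 0 and every family (π_T)_{T∈ℕ} of policies (one for each horizon T, with flexing decisions ω(t) ∈ {0,1} and within-flex-set bin choices allowed to be arbitrary measurable functions of the entire realization of types), if M^{π_T} ≤ a·√T almost surely for every T, then E[Gap^{π_T}(T)] ∉ o(√T); in fact there exist c > 0 and T₀ such that E[Gap^{π_T}(T)] ≥ c·√T for all T ≥ T₀. -/

import Mathlib

/-!
Let `S` be the number of balls preferring bin `0`, minus its mean `T / N`. Each flexed ball lowers
the load of bin `0` by at most one compared with the unflexed process, so the gap is at least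
`S - a √T`; it is also nonnegative, since the maximum load is at least the average. Thus it
suffices that `S ≥ (a + 1) √T` with probability bounded below, uniformly in large `T`.

This anticoncentration bound comes from exponential moments. With `v = (1/N)(1 - 1/N)` the variance
of one increment of `S`, second-order expansion of `exp` gives, for fixed `l > 0` and `T` large,
`E exp (l S / √T) ≥ exp (l² v / 8)` and `E exp (2 l S / √T) ≤ exp (4 l² v)`
(`exp_le_expec_exp`, `expec_exp_le`). A pointwise form of the Cauchy–Schwarz inequality
(`exp_le_truncation`) converts these into a lower bound on the expected gap as soon as `l` is so
large that `l² v / 8` is at least `l (a + 1) + 2`.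
-/

attribute [local instance] Classical.propDecidable

/-- An arrival type: (is-flex-ball, preferred bin, flex set). -/
abbrev Arrival (N : ℕ) := Bool × Fin N × Finset (Fin N)

/-- Mass of a single arrival: `f ~ Bernoulli(q)`, `p` uniform on `Fin N`,
`F` uniform on the 2-element subsets of `Fin N`, mutually independent. -/
noncomputable def arrivalProb (N : ℕ) (q : ℝ) (a : Arrival N) : ℝ :=
  (if a.1 then q else 1 - q) * (1 / (N : ℝ)) *
    (if a.2.2.card = 2 then 1 / (N.choose 2 : ℝ) else 0)

/-- Mass of a sequence of `T` i.i.d. arrivals. -/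
noncomputable def seqMass (N T : ℕ) (q : ℝ) (xs : Fin T → Arrival N) : ℝ :=
  ∏ t, arrivalProb N q (xs t)

/-- Expectation of a real random variable on the canonical space of `T` arrivals. -/
noncomputable def expec (N T : ℕ) (q : ℝ) (X : (Fin T → Arrival N) → ℝ) : ℝ :=
  ∑ xs : Fin T → Arrival N, seqMass N T q xs * X xs

/-- Probability of an event on the canonical space of `T` arrivals. -/
noncomputable def prob (N T : ℕ) (q : ℝ) (A : (Fin T → Arrival N) → Prop) : ℝ :=
  ∑ xs : Fin T → Arrival N, if A xs then seqMass N T q xs else 0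

/-- The least-loaded bin in `F` (ties broken in favor of the smallest index). -/
noncomputable def argminBin {N : ℕ} [NeZero N] (x : Fin N → ℕ) (F : Finset (Fin N)) : Fin N :=
  if hF : (F.filter fun i => ∀ j ∈ F, x i ≤ x j).Nonempty
  then (F.filter fun i => ∀ j ∈ F, x i ≤ x j).min' hF
  else 0

/-- One step of the greedy (least-loaded) allocation: if the ball is a flex ball and
flexing is exerted, it goes to the least-loaded bin of its flex set (lexicographic
tie-breaking); otherwise it goes to its preferred bin. -/
noncomputable def greedyStep {N : ℕ} [NeZero N] (flex : Bool) (a : Arrival N)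
    (x : Fin N → ℕ) : Fin N → ℕ :=
  fun i => if i = (if a.1 && flex then argminBin x a.2.2 else a.2.1) then x i + 1 else x i

/-- Load process under a flexing rule `dec` (which may depend on the whole realization,
the time, and the current loads), with greedy placement of flexed flex balls. -/
noncomputable def greedyLoads {N T : ℕ} [NeZero N]
    (dec : (Fin T → Arrival N) → ℕ → (Fin N → ℕ) → Bool)
    (xs : Fin T → Arrival N) : ℕ → Fin N → ℕ
  | 0 => fun _ => 0
  | t + 1 =>
    if h : t < T then
      greedyStep (dec xs t (greedyLoads dec xs t)) (xs ⟨t, h⟩) (greedyLoads dec xs t)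
    else greedyLoads dec xs t

/-- The maximum load over all bins. -/
noncomputable def maxLoad {N : ℕ} (x : Fin N → ℕ) : ℕ := Finset.univ.sup x

/-- `Gap(t)` : maximum load minus the average load `t/N`. -/
noncomputable def gap {N : ℕ} (x : Fin N → ℕ) (t : ℕ) : ℝ :=
  (maxLoad x : ℝ) - (t : ℝ) / (N : ℝ)

/-- Number of flexed balls `M = ∑_t f_t ω(t)`. -/
noncomputable def numFlexed {N T : ℕ} [NeZero N]
    (dec : (Fin T → Arrival N) → ℕ → (Fin N → ℕ) → Bool) (xs : Fin T → Arrival N) : ℕ :=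
  ∑ t : Fin T, if (xs t).1 && dec xs (t : ℕ) (greedyLoads dec xs (t : ℕ)) then 1 else 0

/-- Flexing rule of a "static"-type policy: flex exactly from period
`T - c·√(T log T)` on (ball `t` corresponds to step index `t-1`). -/
noncomputable def lateDec (N T : ℕ) (c : ℝ) :
    (Fin T → Arrival N) → ℕ → (Fin N → ℕ) → Bool :=
  fun _ s _ =>
    if (T : ℝ) - c * Real.sqrt ((T : ℝ) * Real.log (T : ℝ)) ≤ ((s : ℝ) + 1) then true else false

/-- Flexing rule of the dynamic policy: flex at period `t = s+1` iff the current gap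
`Gap(t-1)` is at least `a_d (T - t) q / N` with `a_d = 1/(5 C(N,2))`. -/
noncomputable def dynDec (N T : ℕ) (q : ℝ) :
    (Fin T → Arrival N) → ℕ → (Fin N → ℕ) → Bool :=
  fun _ s x =>
    if (1 / (5 * (N.choose 2 : ℝ))) * ((T : ℝ) - ((s : ℝ) + 1)) * q / (N : ℝ) ≤ gap x s
    then true else false

/-- First time (within horizon `T`) at which the maximum load equals `S`. -/
noncomputable def hitTime {N : ℕ} (T S : ℕ) (x : ℕ → Fin N → ℕ) : ℕ :=
  if h : ((Finset.range (T + 1)).filter fun t => maxLoad (x t) = S).Nonempty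
  then ((Finset.range (T + 1)).filter fun t => maxLoad (x t) = S).min' h
  else T

/-- The dynamic opaque policy: the flag records whether the trigger condition
`Gap(t) ≥ c_d (T-t) q / N` (with `c_d = 1/(10 C(N,2))`) has held at some time `≤ t`;
from then on every flex ball is flexed (greedy placement). Returns (flag, loads). -/
noncomputable def dynOpaque (N T : ℕ) [NeZero N] (q : ℝ) (xs : Fin T → Arrival N) :
    ℕ → Bool × (Fin N → ℕ)
  | 0 =>
    (if (1 / (10 * (N.choose 2 : ℝ))) * (T : ℝ) * q / (N : ℝ) ≤ 0 then true else false,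
      fun _ => 0)
  | t + 1 =>
    let p := dynOpaque N T q xs t
    let x' := if h : t < T then greedyStep p.1 (xs ⟨t, h⟩) p.2 else p.2
    (p.1 ||
      (if (1 / (10 * (N.choose 2 : ℝ))) * ((T : ℝ) - ((t : ℝ) + 1)) * q / (N : ℝ) ≤
          gap x' (t + 1)
       then true else false),
     x')

/-- Number of flexed balls `D = ∑_{t=1}^{R} f_t ω(t)` during one replenishment cycle,
for a policy given by the flexing rule `dec`. -/
noncomputable def cycleFlexCount (N T : ℕ) [NeZero N]
    (dec : (Fin T → Arrival N) → ℕ → (Fin N → ℕ) → Bool) (S : ℕ)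
    (xs : Fin T → Arrival N) : ℕ :=
  ∑ t ∈ Finset.range (hitTime T S (greedyLoads dec xs)),
    if h : t < T then (if (xs ⟨t, h⟩).1 && dec xs t (greedyLoads dec xs t) then 1 else 0)
    else 0

/-- Number of flexed balls during one replenishment cycle of the dynamic opaque policy. -/
noncomputable def dynFlexCount (N T : ℕ) [NeZero N] (q : ℝ) (S : ℕ)
    (xs : Fin T → Arrival N) : ℕ :=
  ∑ t ∈ Finset.range (hitTime T S fun u => (dynOpaque N T q xs u).2),
    if h : t < T then (if (xs ⟨t, h⟩).1 && (dynOpaque N T q xs t).1 then 1 else 0) else 0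

/-- Load process of a general policy: the flexing decision `dec` and the chosen bin `ch`
may be arbitrary functions of the entire realization. -/
noncomputable def polLoads {N T : ℕ}
    (dec : (Fin T → Arrival N) → Fin T → Bool)
    (ch : (Fin T → Arrival N) → Fin T → Fin N)
    (xs : Fin T → Arrival N) : ℕ → Fin N → ℕ
  | 0 => fun _ => 0
  | t + 1 =>
    let x := polLoads dec ch xs t
    if h : t < T then
      fun i =>
        if i = (if (xs ⟨t, h⟩).1 && dec xs ⟨t, h⟩ then ch xs ⟨t, h⟩ else (xs ⟨t, h⟩).2.1)
        then x i + 1 else x i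
    else x

/-- Number of flexed balls `M^π = ∑_t f_t ω(t)` of a general policy. -/
noncomputable def polFlexCount {N T : ℕ}
    (dec : (Fin T → Arrival N) → Fin T → Bool) (xs : Fin T → Arrival N) : ℕ :=
  ∑ t : Fin T, if (xs t).1 && dec xs t then 1 else 0

/-! ### Expectations of product functionals -/

lemma arrivalProb_nonneg (N : ℕ) (q : ℝ) (hq0 : 0 < q) (hq1 : q ≤ 1) (x : Arrival N) :
    0 ≤ arrivalProb N q x := by
  unfold arrivalProb
  have h1 : 0 ≤ 1 - q := by linarith
  split_ifs <;> positivity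

lemma seqMass_nonneg (N T : ℕ) (q : ℝ) (hq0 : 0 < q) (hq1 : q ≤ 1) (xs : Fin T → Arrival N) :
    0 ≤ seqMass N T q xs :=
  Finset.prod_nonneg fun _ _ => arrivalProb_nonneg N q hq0 hq1 _

/-- The preferred bin of a single arrival is uniform on `Fin N`. -/
lemma sum_arrivalProb_mul (N : ℕ) (hN : 2 ≤ N) (q : ℝ) (h : Fin N → ℝ) :
    ∑ x : Arrival N, arrivalProb N q x * h x.2.1 = (1 / (N : ℝ)) * ∑ i, h i := by
  have hc : (N.choose 2 : ℝ) ≠ 0 := by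
    exact_mod_cast (Nat.choose_pos hN).ne'
  have hF : ∑ F : Finset (Fin N), (if F.card = 2 then 1 / (N.choose 2 : ℝ) else 0) = 1 := by
    have hcard := Fintype.card_finset_len (α := Fin N) 2
    rw [Fintype.card_subtype, Fintype.card_fin] at hcard
    rw [← Finset.sum_filter, Finset.sum_const, nsmul_eq_mul]
    have : ((Finset.univ.filter fun F : Finset (Fin N) => F.card = 2).card : ℝ)
        = N.choose 2 := by
      rw [← hcard]
    rw [this]
    field_simp
  have hinner : ∀ (f : Bool) (i : Fin N),
      ∑ F : Finset (Fin N), arrivalProb N q (f, i, F) * h i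
        = (if f then q else 1 - q) * ((1 / (N : ℝ)) * h i) := by
    intro f i
    have hterm : ∀ F : Finset (Fin N), arrivalProb N q (f, i, F) * h i
        = ((if f then q else 1 - q) * ((1 / (N : ℝ)) * h i))
          * (if F.card = 2 then 1 / (N.choose 2 : ℝ) else 0) := by
      intro F
      cases f <;> simp only [arrivalProb] <;> ring
    simp_rw [hterm]
    rw [← Finset.mul_sum, hF, mul_one]
  rw [Fintype.sum_prod_type]
  simp_rw [Fintype.sum_prod_type, hinner]
  simp only [Fintype.sum_bool, ← Finset.mul_sum, if_true, Bool.false_eq_true, if_false]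
  ring

lemma expec_prod (N T : ℕ) (q : ℝ) (g : Arrival N → ℝ) :
    expec N T q (fun xs => ∏ t, g (xs t)) = (∑ x, arrivalProb N q x * g x) ^ T := by
  unfold expec seqMass
  simp_rw [← Finset.prod_mul_distrib]
  rw [Fintype.sum_pow]

/-! ### Exponential moments of the centered count of a bin -/

/-- Centered indicator that a ball with preferred bin `i` prefers the bin `b`. -/
noncomputable def centeredPref {N : ℕ} (b i : Fin N) : ℝ :=
  (if i = b then 1 else 0) - 1 / (N : ℝ)

/-- Number of balls preferring bin `b`, minus its mean `T / N`. -/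
noncomputable def centeredCount {N T : ℕ} (b : Fin N) (xs : Fin T → Arrival N) : ℝ :=
  ∑ t, centeredPref b (xs t).2.1

/-- Variance of `centeredPref b` under the uniform preferred bin. -/
noncomputable def prefVar (N : ℕ) : ℝ := (1 / (N : ℝ)) * (1 - 1 / (N : ℝ))

lemma prefVar_pos {N : ℕ} (hN : 2 ≤ N) : 0 < prefVar N := by
  have h : (2 : ℝ) ≤ N := by exact_mod_cast hN
  have h1 : 1 / (N : ℝ) ≤ 1 / 2 := one_div_le_one_div_of_le (by norm_num) h
  have h0 : 0 < 1 / (N : ℝ) := by positivity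
  unfold prefVar
  exact mul_pos h0 (by linarith)

lemma prefVar_le_one {N : ℕ} : prefVar N ≤ 1 := by
  unfold prefVar
  nlinarith [sq_nonneg (1 / (N : ℝ) - 1 / 2)]

lemma sum_centeredPref {N : ℕ} (hN : 2 ≤ N) (b : Fin N) : ∑ i, centeredPref b i = 0 := by
  have hN0 : (N : ℝ) ≠ 0 := by positivity
  simp [centeredPref, Finset.sum_sub_distrib, hN0]

lemma mean_centeredPref_sq {N : ℕ} (hN : 2 ≤ N) (b : Fin N) :
    (1 / (N : ℝ)) * ∑ i, centeredPref b i ^ 2 = prefVar N := by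
  have hN0 : (N : ℝ) ≠ 0 := by positivity
  have h : ∀ i : Fin N, centeredPref b i ^ 2
      = (if i = b then 1 else 0) * (1 - 2 / (N : ℝ)) + (1 / (N : ℝ)) ^ 2 := by
    intro i
    unfold centeredPref
    split_ifs <;> ring
  simp_rw [h]
  rw [Finset.sum_add_distrib, ← Finset.sum_mul]
  simp only [Finset.sum_ite_eq', Finset.mem_univ, if_true, Finset.sum_const, Finset.card_univ,
    Fintype.card_fin, nsmul_eq_mul]
  unfold prefVar
  field_simp
  ring

lemma abs_centeredPref_le {N : ℕ} (hN : 2 ≤ N) (b i : Fin N) : |centeredPref b i| ≤ 1 := by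
  have h : (2 : ℝ) ≤ N := by exact_mod_cast hN
  have h1 : 1 / (N : ℝ) ≤ 1 / 2 := one_div_le_one_div_of_le (by norm_num) h
  have h0 : 0 < 1 / (N : ℝ) := by positivity
  unfold centeredPref
  rw [abs_le]
  split_ifs <;> constructor <;> linarith

lemma exp_le_quadratic {y : ℝ} (hy : |y| ≤ 1) : Real.exp y ≤ 1 + y + y ^ 2 := by
  have := (abs_le.mp (Real.abs_exp_sub_one_sub_id_le hy)).2
  linarith

lemma quadratic_le_exp {y : ℝ} (hy : |y| ≤ 1) : 1 + y + y ^ 2 / 4 ≤ Real.exp y := by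
  have h := (abs_le.mp (Real.exp_bound hy (n := 3) (by norm_num))).1
  have h3 : |y| ^ 3 ≤ y ^ 2 := by
    rw [← sq_abs y]
    exact pow_le_pow_of_le_one (abs_nonneg y) hy (by norm_num)
  norm_num [Finset.sum_range_succ, Nat.factorial] at h
  nlinarith [sq_nonneg y]

lemma expec_exp_centeredCount {N : ℕ} (hN : 2 ≤ N) (T : ℕ) (q : ℝ) (b : Fin N) (s : ℝ) :
    expec N T q (fun xs => Real.exp (s * centeredCount b xs))
      = ((1 / (N : ℝ)) * ∑ i, Real.exp (s * centeredPref b i)) ^ T := by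
  have h := expec_prod N T q (fun x => Real.exp (s * centeredPref b x.2.1))
  rw [sum_arrivalProb_mul N hN q (fun i => Real.exp (s * centeredPref b i))] at h
  rw [← h]
  simp_rw [centeredCount, Finset.mul_sum, Real.exp_sum]

/-- The mean over the preferred bin of a quadratic polynomial in `s * centeredPref b`. -/
lemma mean_quadratic {N : ℕ} (hN : 2 ≤ N) (b : Fin N) (s r : ℝ) :
    (1 / (N : ℝ)) * ∑ i, (1 + s * centeredPref b i + (s * centeredPref b i) ^ 2 * r)
      = 1 + s ^ 2 * prefVar N * r := by
  have hN0 : (N : ℝ) ≠ 0 := by positivity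
  rw [← mean_centeredPref_sq hN b]
  simp_rw [mul_pow]
  rw [Finset.sum_add_distrib, Finset.sum_add_distrib, ← Finset.sum_mul, ← Finset.mul_sum,
    ← Finset.mul_sum, sum_centeredPref hN b]
  simp
  field_simp

lemma abs_mul_centeredPref_le {N : ℕ} (hN : 2 ≤ N) (b i : Fin N) {s : ℝ} (hs0 : 0 ≤ s)
    (hs1 : s ≤ 1) : |s * centeredPref b i| ≤ 1 := by
  rw [abs_mul, abs_of_nonneg hs0]
  exact mul_le_one₀ hs1 (abs_nonneg _) (abs_centeredPref_le hN b i)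

lemma expec_exp_le {N : ℕ} (hN : 2 ≤ N) (T : ℕ) (q : ℝ) (b : Fin N) {s : ℝ} (hs0 : 0 ≤ s)
    (hs1 : s ≤ 1) :
    expec N T q (fun xs => Real.exp (s * centeredCount b xs))
      ≤ Real.exp (T * (s ^ 2 * prefVar N)) := by
  rw [expec_exp_centeredCount hN, Real.exp_nat_mul]
  refine pow_le_pow_left₀ (by positivity) ?_ T
  calc (1 / (N : ℝ)) * ∑ i, Real.exp (s * centeredPref b i)
      ≤ (1 / (N : ℝ)) * ∑ i, (1 + s * centeredPref b i + (s * centeredPref b i) ^ 2 * 1) := by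
        refine mul_le_mul_of_nonneg_left (Finset.sum_le_sum fun i _ => ?_) (by positivity)
        rw [mul_one]
        exact exp_le_quadratic (abs_mul_centeredPref_le hN b i hs0 hs1)
    _ = s ^ 2 * prefVar N + 1 := by rw [mean_quadratic hN]; ring
    _ ≤ Real.exp (s ^ 2 * prefVar N) := Real.add_one_le_exp _

lemma exp_le_expec_exp {N : ℕ} (hN : 2 ≤ N) (T : ℕ) (q : ℝ) (b : Fin N) {s : ℝ} (hs0 : 0 ≤ s)
    (hs1 : s ≤ 1) :
    Real.exp (T * (s ^ 2 * prefVar N / 8))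
      ≤ expec N T q (fun xs => Real.exp (s * centeredCount b xs)) := by
  rw [expec_exp_centeredCount hN, Real.exp_nat_mul]
  refine pow_le_pow_left₀ (by positivity) ?_ T
  have hw0 : 0 ≤ s ^ 2 * prefVar N := mul_nonneg (sq_nonneg s) (prefVar_pos hN).le
  have hw1 : s ^ 2 * prefVar N ≤ 1 :=
    mul_le_one₀ (pow_le_one₀ hs0 hs1) (prefVar_pos hN).le prefVar_le_one
  calc Real.exp (s ^ 2 * prefVar N / 8)
      ≤ 1 + s ^ 2 * prefVar N / 8 + (s ^ 2 * prefVar N / 8) ^ 2 := by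
        refine exp_le_quadratic ?_
        rw [abs_of_nonneg (by linarith)]
        linarith
    _ ≤ 1 + s ^ 2 * prefVar N * (1 / 4) := by nlinarith
    _ = (1 / (N : ℝ)) * ∑ i, (1 + s * centeredPref b i + (s * centeredPref b i) ^ 2 * (1 / 4)) :=
        (mean_quadratic hN b s _).symm
    _ ≤ (1 / (N : ℝ)) * ∑ i, Real.exp (s * centeredPref b i) := by
        refine mul_le_mul_of_nonneg_left (Finset.sum_le_sum fun i _ => ?_) (by positivity)
        have := quadratic_le_exp (abs_mul_centeredPref_le hN b i hs0 hs1)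
        linarith

/-! ### Pathwise bounds on the gap -/

/-- The bin receiving ball `t`. -/
noncomputable def polBin {N T : ℕ} (dec : (Fin T → Arrival N) → Fin T → Bool)
    (ch : (Fin T → Arrival N) → Fin T → Fin N) (xs : Fin T → Arrival N) (t : Fin T) : Fin N :=
  if (xs t).1 && dec xs t then ch xs t else (xs t).2.1

lemma polLoads_eq_sum {N T : ℕ} (dec : (Fin T → Arrival N) → Fin T → Bool)
    (ch : (Fin T → Arrival N) → Fin T → Fin N) (xs : Fin T → Arrival N) (i : Fin N) :
    polLoads dec ch xs T i = ∑ t, if i = polBin dec ch xs t then 1 else 0 := by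
  have key : ∀ n, polLoads dec ch xs n i = ∑ s ∈ Finset.range n,
      if h : s < T then (if i = polBin dec ch xs ⟨s, h⟩ then 1 else 0) else 0 := by
    intro n
    induction n with
    | zero => simp [polLoads]
    | succ n ih =>
      rw [Finset.sum_range_succ, ← ih]
      simp only [polLoads, polBin]
      by_cases h : n < T
      · simp only [h, dif_pos]
        split_ifs <;> rfl
      · simp only [h, dif_neg, not_false_eq_true, add_zero]
  rw [key, ← Fin.sum_univ_eq_sum_range
    (fun s => if h : s < T then (if i = polBin dec ch xs ⟨s, h⟩ then 1 else 0) else 0) T]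
  simp

lemma gap_nonneg {N T : ℕ} (hN : 2 ≤ N) (dec : (Fin T → Arrival N) → Fin T → Bool)
    (ch : (Fin T → Arrival N) → Fin T → Fin N) (xs : Fin T → Arrival N) :
    0 ≤ gap (polLoads dec ch xs T) T := by
  have hN0 : (0 : ℝ) < N := by positivity
  have hsum : ∑ i, polLoads dec ch xs T i = T := by
    simp_rw [polLoads_eq_sum]
    rw [Finset.sum_comm]
    simp
  have hle : T ≤ N * maxLoad (polLoads dec ch xs T) := by
    have := Finset.sum_le_card_nsmul Finset.univ (polLoads dec ch xs T)
      (maxLoad (polLoads dec ch xs T)) (fun i _ => Finset.le_sup (Finset.mem_univ i))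
    simpa [hsum] using this
  have hle' : (T : ℝ) ≤ N * (maxLoad (polLoads dec ch xs T) : ℝ) := by exact_mod_cast hle
  unfold gap
  rw [sub_nonneg, div_le_iff₀ hN0]
  linarith

/-- Each flexed ball lowers the load of bin `b` by at most one relative to the unflexed loads. -/
lemma centeredCount_sub_le_gap {N T : ℕ} (dec : (Fin T → Arrival N) → Fin T → Bool)
    (ch : (Fin T → Arrival N) → Fin T → Fin N) (xs : Fin T → Arrival N) (b : Fin N) :
    centeredCount b xs - polFlexCount dec xs ≤ gap (polLoads dec ch xs T) T := by
  have h1 : (∑ t, if (xs t).2.1 = b then 1 else 0)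
      ≤ polLoads dec ch xs T b + polFlexCount dec xs := by
    rw [polLoads_eq_sum, polFlexCount, ← Finset.sum_add_distrib]
    refine Finset.sum_le_sum fun t _ => ?_
    unfold polBin
    by_cases hf : ((xs t).1 && dec xs t) = true
    · simp only [hf, if_true]
      split_ifs <;> omega
    · simp only [hf, eq_comm (a := b)]
      split_ifs <;> simp_all
  have h2 : polLoads dec ch xs T b ≤ maxLoad (polLoads dec ch xs T) :=
    Finset.le_sup (Finset.mem_univ b)
  have h3 : ((∑ t, if (xs t).2.1 = b then 1 else 0 : ℕ) : ℝ)
      ≤ (maxLoad (polLoads dec ch xs T) : ℝ) + polFlexCount dec xs := by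
    exact_mod_cast h1.trans (Nat.add_le_add_right h2 _)
  have h4 : centeredCount b xs
      = ((∑ t, if (xs t).2.1 = b then 1 else 0 : ℕ) : ℝ) - (T : ℝ) / N := by
    simp only [centeredCount, centeredPref, Finset.sum_sub_distrib]
    push_cast
    simp [div_eq_mul_inv]
  unfold gap
  linarith

/-- Pointwise Cauchy–Schwarz with truncation: if `z` exceeds `A + 1`, then `g ≥ 1` pays for
`exp (l * z)` by the inequality between arithmetic and geometric means with weight `K`;
otherwise `exp (l * (A + 1))` does. -/
lemma exp_le_truncation {l A K z g : ℝ} (hl : 0 ≤ l) (hK : 0 < K) (hg : 0 ≤ g)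
    (hzg : z - A ≤ g) :
    Real.exp (l * z) ≤ Real.exp (l * (A + 1)) + K * g + Real.exp (2 * l * z) / K := by
  have hE : Real.exp (2 * l * z) = Real.exp (l * z) ^ 2 := by
    rw [← Real.exp_nat_mul]
    congr 1
    push_cast
    ring
  by_cases hz : z ≤ A + 1
  · have : Real.exp (l * z) ≤ Real.exp (l * (A + 1)) :=
      Real.exp_le_exp.mpr (mul_le_mul_of_nonneg_left hz hl)
    have : 0 ≤ K * g := by positivity
    have : 0 ≤ Real.exp (2 * l * z) / K := by positivity
    linarith
  · have hg1 : 1 ≤ g := by linarith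
    have h0 : 0 < Real.exp (l * (A + 1)) := Real.exp_pos _
    have hKg : K ≤ K * g := le_mul_of_one_le_right hK.le hg1
    have hAM : Real.exp (l * z) ≤ K + Real.exp (2 * l * z) / K := by
      rw [hE, ← sub_le_iff_le_add', le_div_iff₀ hK]
      nlinarith [sq_nonneg (Real.exp (l * z) - K), Real.exp_pos (l * z)]
    linarith

/-- **Proposition 2**: for any family of policies (one per horizon) that almost surely
flexes at most `a √T` times, the expected gap is not `o(√T)`: in fact it is `≥ c √T`
for some `c > 0` and all large enough `T`. -/
theorem few_flexes_large_gap (N : ℕ) (hN : 2 ≤ N) (q : ℝ) (hq0 : 0 < q) (hq1 : q ≤ 1)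
    (a : ℝ) (ha : 0 < a)
    (dec : ∀ T : ℕ, (Fin T → Arrival N) → Fin T → Bool)
    (ch : ∀ T : ℕ, (Fin T → Arrival N) → Fin T → Fin N)
    (hch : ∀ T xs t, (xs t).1 = true → dec T xs t = true → ch T xs t ∈ (xs t).2.2)
    (hM : ∀ (T : ℕ) (xs : Fin T → Arrival N), 0 < seqMass N T q xs →
      (polFlexCount (dec T) xs : ℝ) ≤ a * Real.sqrt T) :
    ∃ c : ℝ, 0 < c ∧ ∃ T₀ : ℕ, ∀ T : ℕ, T₀ ≤ T →
      c * Real.sqrt T ≤ expec N T q (fun xs => gap (polLoads (dec T) (ch T) xs T) T) := by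
  have hv := prefVar_pos hN
  have hv1 : prefVar N ≤ 1 := prefVar_le_one
  let b : Fin N := ⟨0, by omega⟩
  -- `l` is chosen so that `l ^ 2 * v / 8 = l * (a + 3) ≥ l * (a + 1) + 2`.
  obtain ⟨l, hl1, hlv⟩ : ∃ l : ℝ, 1 ≤ l ∧ l ^ 2 * prefVar N / 8 = l * (a + 3) := by
    refine ⟨8 * (a + 3) / prefVar N, ?_, by field_simp⟩
    rw [le_div_iff₀ hv]
    linarith
  have hl0 : 0 < l := by linarith
  set K := Real.exp (4 * l ^ 2 * prefVar N) with hKdef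
  have hK : 0 < K := Real.exp_pos _
  refine ⟨1 / K, by positivity, ⌈4 * l ^ 2⌉₊ + 1, fun T hT => ?_⟩
  have hT' : 4 * l ^ 2 ≤ T := by
    refine (Nat.le_ceil _).trans ?_
    exact_mod_cast (Nat.le_succ _).trans hT
  have hTpos : (0 : ℝ) < T := lt_of_lt_of_le (by positivity) hT'
  have hr : 0 < Real.sqrt T := Real.sqrt_pos.mpr hTpos
  have hr2 : Real.sqrt T ^ 2 = T := Real.sq_sqrt hTpos.le
  have h2l : 2 * l ≤ Real.sqrt T := Real.le_sqrt_of_sq_le (by nlinarith)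
  have hlow := exp_le_expec_exp hN T q b (s := l / Real.sqrt T) (by positivity)
    (by rw [div_le_one hr]; linarith)
  have hupp := expec_exp_le hN T q b (s := 2 * l / Real.sqrt T) (by positivity)
    (by rw [div_le_one hr]; linarith)
  have e1 : (T : ℝ) * ((l / Real.sqrt T) ^ 2 * prefVar N / 8) = l * (a + 3) := by
    rw [← hlv, div_pow, hr2]
    field_simp
  have e2 : (T : ℝ) * ((2 * l / Real.sqrt T) ^ 2 * prefVar N) = 4 * l ^ 2 * prefVar N := by
    rw [div_pow, hr2]
    field_simp
    ring
  rw [e1] at hlow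
  rw [e2, ← hKdef] at hupp
  have hone : expec N T q (fun _ => 1) = 1 := by
    have h := expec_exp_centeredCount hN T q b 0
    have hN0 : (N : ℝ) ≠ 0 := by positivity
    simpa [hN0] using h
  set G : (Fin T → Arrival N) → ℝ := fun xs => gap (polLoads (dec T) (ch T) xs T) T with hG
  have hmain : expec N T q (fun xs => Real.exp (l / Real.sqrt T * centeredCount b xs))
      ≤ Real.exp (l * (a + 1)) * expec N T q (fun _ => 1)
        + K / Real.sqrt T * expec N T q G
        + expec N T q (fun xs => Real.exp (2 * l / Real.sqrt T * centeredCount b xs)) / K := by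
    unfold expec
    rw [Finset.mul_sum, Finset.mul_sum, Finset.sum_div, ← Finset.sum_add_distrib,
      ← Finset.sum_add_distrib]
    refine Finset.sum_le_sum fun xs _ => ?_
    rcases (seqMass_nonneg N T q hq0 hq1 xs).eq_or_lt with h0 | hpos
    · simp [← h0]
    have hzg : centeredCount b xs / Real.sqrt T - a ≤ G xs / Real.sqrt T := by
      rw [sub_le_iff_le_add, div_le_iff₀ hr, add_mul, div_mul_cancel₀ _ hr.ne']
      have h1 := centeredCount_sub_le_gap (dec T) (ch T) xs b
      have h2 := hM T xs hpos
      simp only [hG]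
      linarith
    have h := exp_le_truncation hl0.le hK
      (div_nonneg (gap_nonneg hN (dec T) (ch T) xs) hr.le) hzg
    rw [show l * (centeredCount b xs / Real.sqrt T) = l / Real.sqrt T * centeredCount b xs by ring,
      show 2 * l * (centeredCount b xs / Real.sqrt T)
        = 2 * l / Real.sqrt T * centeredCount b xs by ring] at h
    refine (mul_le_mul_of_nonneg_left h hpos.le).trans (le_of_eq ?_)
    ring
  have hlast : expec N T q (fun xs => Real.exp (2 * l / Real.sqrt T * centeredCount b xs)) / K
      ≤ 1 := (div_le_one hK).mpr hupp
  -- `exp (l * (a + 3)) ≥ 3 * exp (l * (a + 1))`, and the latter exponential is at least `1`.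
  have hexp : Real.exp (l * (a + 1)) + 2 ≤ Real.exp (l * (a + 3)) := by
    have h1 : 1 ≤ Real.exp (l * (a + 1)) := Real.one_le_exp (by positivity)
    have h2 : 3 ≤ Real.exp (2 * l) := by
      have := Real.add_one_le_exp (2 * l)
      linarith
    have h3 : Real.exp (l * (a + 3)) = Real.exp (l * (a + 1)) * Real.exp (2 * l) := by
      rw [← Real.exp_add]
      congr 1
      ring
    rw [h3]
    nlinarith
  have hfin : 1 ≤ K / Real.sqrt T * expec N T q G := by
    rw [hone, mul_one] at hmain
    linarith
  rw [div_mul_eq_mul_div, one_mul, div_le_iff₀ hK]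
  rw [div_mul_eq_mul_div, le_div_iff₀ hr] at hfin
  linarith
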